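/- For every τ in the complex upper half-plane ℍ, one has Σ_{k≥0, k≡0 (mod 8)} c(k)·q^{k−1} = η(8τ)⁵/η(16τ)⁴ + 32·η(32τ)⁸/(η(8τ)³·η(16τ)⁴). (That is, the part of the Fourier expansion of A(τ) = η(4τ)⁸/η(8τ)⁷ = Σ_{n≥−1} a(n)qⁿ supported on exponents n ≡ 7 (mod 8) equals η(8τ)⁵/η(16τ)⁴ + 32·η(32τ)⁸/(η(8τ)³·η(16τ)⁴).) -/

import Mathlib

noncomputable section
open Complex Real

/-- `q = e^{2πiτ}`. -/
def nome (τ : ℂ) : ℂ := Complex.exp (2 * (π : ℂ) * I * τ)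

/-- Dedekind eta function `η(τ) = e^{πiτ/12} ∏_{n≥1} (1 − qⁿ)`. -/
def dedekindEta (τ : ℂ) : ℂ :=
  Complex.exp ((π : ℂ) * I * τ / 12) * ∏' n : ℕ, (1 - nome τ ^ (n + 1))

/-!
Averaging over the eighth roots of unity extracts the exponents divisible by `8`. Multiplied by `q`,
the eta quotient becomes `E(q⁴)⁸ / E(q⁸)⁷` with `E(q) = (q; q)_∞`, and multiplying `q` by an eighth
root of unity changes `x = q⁴` only by a sign. Hence everything reduces to evaluating
`E(x)⁸ + E(-x)⁸`.

By Jacobi's triple product, `E(∓x)² = E(x²) θ₃(±x)`, so with `a = θ₃(x)` and `b = θ₃(-x)` this is a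
multiple of `a⁴ + b⁴ = 2 (ab)² + (a² - b²)²`. Here `ab = θ₃(-x²)²`, while splitting `θ₃` into even
and odd indices shows that `a² - b²` is a multiple of `θ₂(x²)²`. The product
formulas for these theta constants give the two terms of the theorem.
-/

/-! ### Multisection of series -/

section Summation

open Finset

lemma sum_range_pow_pow_of_isPrimitiveRoot {R : Type*} [CommRing R] [IsDomain R] {m : ℕ} {ζ : R}
    (hζ : IsPrimitiveRoot ζ m) (k : ℕ) :
    ∑ j ∈ range m, (ζ ^ k) ^ j = if k % m = 0 then (m : R) else 0 := by
  split_ifs with hk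
  · rw [(hζ.pow_eq_one_iff_dvd k).mpr (Nat.dvd_of_mod_eq_zero hk), one_geom_sum]
  · have h_ne : ζ ^ k - 1 ≠ 0 := fun h ↦
      hk (Nat.mod_eq_zero_of_dvd ((hζ.pow_eq_one_iff_dvd k).mp (sub_eq_zero.mp h)))
    refine (mul_eq_zero.mp ?_).resolve_right h_ne
    rw [geom_sum_mul, pow_right_comm, hζ.pow_eq_one, one_pow, sub_self]

lemma hasSum_multisection {R : Type*} [CommRing R] [IsDomain R] [TopologicalSpace R]
    [ContinuousAdd R] {m : ℕ} {ζ : R} (hζ : IsPrimitiveRoot ζ m) {a : ℕ → R} {z : R} {s : ℕ → R}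
    (h : ∀ j ∈ range m, HasSum (fun k ↦ a k * (ζ ^ j * z) ^ k) (s j)) :
    HasSum (fun k ↦ m * ((if k % m = 0 then a k else 0) * z ^ k)) (∑ j ∈ range m, s j) := by
  refine (hasSum_sum h).congr_fun fun k ↦ ?_
  have h_term (j : ℕ) : a k * (ζ ^ j * z) ^ k = a k * z ^ k * (ζ ^ k) ^ j := by ring
  simp only [h_term, ← mul_sum, sum_range_pow_pow_of_isPrimitiveRoot hζ k]
  split_ifs <;> ring

lemma hasSum_int_of_even_of_odd {M : Type*} [AddCommMonoid M] [TopologicalSpace M] [ContinuousAdd M]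
    {f : ℤ → M} {a b : M} (h_even : HasSum (fun j ↦ f (2 * j)) a)
    (h_odd : HasSum (fun j ↦ f (2 * j + 1)) b) : HasSum f (a + b) := by
  have h_inj := mul_right_injective₀ (two_ne_zero' ℤ)
  refine (h_inj.hasSum_range_iff.mpr h_even).add_isCompl ?_
    (((add_left_injective 1).comp h_inj).hasSum_range_iff.mpr h_odd)
  simpa [Function.comp_def] using Int.isCompl_even_odd

end Summation

/-! ### Infinite products and the Jacobi triple product -/

section QSeries

open Filter Topology Finset

variable {𝕜 : Type*} [NormedField 𝕜]

/-- The infinite `q`-Pochhammer symbol `(a; q)_∞ = ∏_{n≥0} (1 - a qⁿ)`, meaningful for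
`‖q‖ < 1`. -/
def qPochhammer (a q : 𝕜) : 𝕜 := ∏' n : ℕ, (1 - a * q ^ n)

/-- Euler's function `(q; q)_∞ = ∏_{n≥1} (1 - qⁿ)`: the Dedekind eta function without its
fractional power of `q`. -/
def eulerFunction (q : 𝕜) : 𝕜 := qPochhammer q q

/-- The tail `(q^{m+1}; q)_∞` of Euler's product, for `m : ℤ`. It equals `(q; q)_∞ / (q; q)_m` for
`0 ≤ m` and vanishes for `m < 0`, so it stands in for `1 / (q; q)_m` without case distinctions. -/
def eulerTail (q : 𝕜) (m : ℤ) : 𝕜 := qPochhammer (q ^ (m + 1)) q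

/-- The general term of the two-variable theta series `∑ q^{j²} z^j`. -/
def jacobiTerm (q z : 𝕜) (j : ℤ) : 𝕜 := q ^ (j ^ 2) * z ^ j

/-- The theta term weighted by a rescaled central Gaussian binomial coefficient in base `q²`: the
summand in the finite form of the triple product. It vanishes for `n < |j|`. -/
def truncatedJacobiTerm (q z : 𝕜) (n : ℕ) (j : ℤ) : 𝕜 :=
  eulerTail (q ^ 2) (n + j) * eulerTail (q ^ 2) (n - j) * jacobiTerm q z j

/-- The theta constant `θ₃ = ∑ q^{j²}`, as a function of the nome `q`; then `θ₄` is
`thetaThree (-q)`. -/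
def thetaThree (q : 𝕜) : 𝕜 := ∑' j : ℤ, q ^ (j ^ 2)

/-- The theta constant `θ₂ = ∑ q^{(j + 1/2)²}` divided by `q^{1/4}`, which leaves integral
exponents. -/
def reducedThetaTwo (q : 𝕜) : 𝕜 := ∑' j : ℤ, q ^ (j ^ 2 + j)

lemma norm_pow_lt_one {q : 𝕜} (hq : ‖q‖ < 1) {k : ℕ} (hk : k ≠ 0) : ‖q ^ k‖ < 1 := by
  rw [norm_pow]
  exact pow_lt_one₀ (norm_nonneg q) hq hk

lemma one_sub_pow_ne_zero {q : 𝕜} (hq : ‖q‖ < 1) {k : ℕ} (hk : k ≠ 0) : 1 - q ^ k ≠ 0 := by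
  refine sub_ne_zero.mpr fun h ↦ ?_
  simpa [← h] using norm_pow_lt_one hq hk

lemma summable_norm_mul_pow (a : 𝕜) {q : 𝕜} (hq : ‖q‖ < 1) :
    Summable fun n : ℕ ↦ ‖a * q ^ n‖ := by
  simpa only [norm_mul, norm_pow] using
    (summable_geometric_of_lt_one (norm_nonneg q) hq).mul_left ‖a‖

lemma qPochhammer_eq_zero {a q : 𝕜} (n : ℕ) (h : a * q ^ n = 1) : qPochhammer a q = 0 :=
  tprod_of_exists_eq_zero ⟨n, by rw [h, sub_self]⟩

lemma eulerTail_zero (q : 𝕜) : eulerTail q 0 = eulerFunction q := by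
  simp only [eulerTail, eulerFunction, zero_add, zpow_one]

lemma eulerTail_of_neg {q : 𝕜} (hq0 : q ≠ 0) {m : ℤ} (hm : m < 0) : eulerTail q m = 0 := by
  refine qPochhammer_eq_zero (-(m + 1)).toNat ?_
  rw [← zpow_natCast, ← zpow_add₀ hq0, Int.toNat_of_nonneg (by lia), add_neg_cancel, zpow_zero]

lemma jacobiTerm_add_one {q z : 𝕜} (hq0 : q ≠ 0) (hz : z ≠ 0) (j : ℤ) :
    jacobiTerm q z (j + 1) = q ^ (2 * j + 1) * z * jacobiTerm q z j := by
  rw [jacobiTerm, jacobiTerm, show (j + 1) ^ 2 = 2 * j + 1 + j ^ 2 by ring, zpow_add₀ hq0,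
    zpow_add_one₀ hz]
  ring

lemma summable_jacobiTerm_natCast {q z : 𝕜} (hq0 : q ≠ 0) (hq : ‖q‖ < 1) (hz : z ≠ 0) :
    Summable fun n : ℕ ↦ ‖jacobiTerm q z n‖ := by
  have h_ne (n : ℕ) : jacobiTerm q z n ≠ 0 := mul_ne_zero (zpow_ne_zero _ hq0) (zpow_ne_zero _ hz)
  refine summable_of_ratio_test_tendsto_lt_one zero_lt_one
    (.of_forall fun n ↦ norm_ne_zero_iff.mpr (h_ne n)) ?_
  have h_ratio (n : ℕ) : ‖‖jacobiTerm q z (n + 1 : ℕ)‖‖ / ‖‖jacobiTerm q z n‖‖ =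
      ‖q ^ (2 * n + 1)‖ * ‖z‖ := by
    rw [norm_norm, norm_norm, Nat.cast_add_one, jacobiTerm_add_one hq0 hz, norm_mul, norm_mul,
      mul_div_cancel_right₀ _ (norm_ne_zero_iff.mpr (h_ne n))]
    norm_cast
  have h_odd : Tendsto (fun n : ℕ ↦ 2 * n + 1) atTop atTop :=
    tendsto_atTop_mono (fun n ↦ (by lia : n ≤ 2 * n + 1)) tendsto_id
  simpa only [h_ratio, Function.comp_def, norm_zero, zero_mul] using
    ((tendsto_pow_atTop_nhds_zero_of_norm_lt_one hq).comp h_odd).norm.mul_const ‖z‖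

lemma summable_norm_jacobiTerm {q z : 𝕜} (hq0 : q ≠ 0) (hq : ‖q‖ < 1) (hz : z ≠ 0) :
    Summable fun j : ℤ ↦ ‖jacobiTerm q z j‖ := by
  refine .of_nat_of_neg (summable_jacobiTerm_natCast hq0 hq hz) ?_
  simpa only [jacobiTerm, neg_sq, inv_zpow, zpow_neg] using
    summable_jacobiTerm_natCast hq0 hq (inv_ne_zero hz)

section Complete

variable [CompleteSpace 𝕜]

lemma hasProd_qPochhammer (a : 𝕜) {q : 𝕜} (hq : ‖q‖ < 1) :
    HasProd (fun n : ℕ ↦ 1 - a * q ^ n) (qPochhammer a q) := by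
  have h : Summable fun n : ℕ ↦ ‖-(a * q ^ n)‖ := by
    simpa only [norm_neg] using summable_norm_mul_pow a hq
  simpa only [qPochhammer, sub_eq_add_neg] using (multipliable_one_add_of_summable h).hasProd

lemma qPochhammer_eq_one_sub_mul (a : 𝕜) {q : 𝕜} (hq : ‖q‖ < 1) :
    qPochhammer a q = (1 - a) * qPochhammer (a * q) q := by
  have h : HasProd (fun n : ℕ ↦ 1 - a * q ^ (n + 1)) (qPochhammer (a * q) q) := by
    simpa only [pow_succ', mul_assoc] using hasProd_qPochhammer (a * q) hq
  simpa only [pow_zero, mul_one] using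
    (hasProd_qPochhammer a hq).unique (h.zero_mul (f := fun n ↦ 1 - a * q ^ n))

lemma qPochhammer_mul_qPochhammer_neg (a : 𝕜) {q : 𝕜} (hq : ‖q‖ < 1) :
    qPochhammer a q * qPochhammer (-a) q = qPochhammer (a ^ 2) (q ^ 2) := by
  refine ((hasProd_qPochhammer a hq).mul (hasProd_qPochhammer (-a) hq)).unique ?_
  convert hasProd_qPochhammer (a ^ 2) (norm_pow_lt_one hq two_ne_zero) using 2
  ring

lemma qPochhammer_even_mul_odd (a : 𝕜) {q : 𝕜} (hq : ‖q‖ < 1) :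
    qPochhammer a (q ^ 2) * qPochhammer (a * q) (q ^ 2) = qPochhammer a q := by
  have hq2 := norm_pow_lt_one hq two_ne_zero
  refine (HasProd.even_mul_odd ?_ ?_).unique (hasProd_qPochhammer a hq)
  · simpa only [pow_mul] using hasProd_qPochhammer a hq2
  · simpa only [pow_succ', pow_mul, mul_assoc] using hasProd_qPochhammer (a * q) hq2

lemma tendsto_qPochhammer_one {ι : Type*} {l : Filter ι} {a : ι → 𝕜} (ha : Tendsto a l (𝓝 0))
    {q : 𝕜} (hq : ‖q‖ < 1) : Tendsto (fun i ↦ qPochhammer (a i) q) l (𝓝 1) := by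
  have ha_le : ∀ᶠ i in l, ‖a i‖ ≤ 1 :=
    (ha.norm.eventually_lt_const (by simp)).mono fun _ ↦ le_of_lt
  have h := tendsto_tprod_one_add_of_dominated_convergence (𝓕 := l)
    (f := fun i n ↦ -(a i * q ^ n)) (g := fun _ : ℕ ↦ 0)
    (summable_geometric_of_lt_one (norm_nonneg q) hq)
    (fun n ↦ by simpa using (ha.mul_const (q ^ n)).neg)
    (ha_le.mono fun i hi n ↦ by
      simpa only [norm_neg, norm_mul, norm_pow] using
        mul_le_of_le_one_left (pow_nonneg (norm_nonneg q) n) hi)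
  simpa only [qPochhammer, sub_eq_add_neg, add_zero, tprod_one] using h

lemma eulerFunction_ne_zero {q : 𝕜} (hq : ‖q‖ < 1) : eulerFunction q ≠ 0 := by
  have h := tprod_one_add_ne_zero_of_summable (f := fun n : ℕ ↦ -(q * q ^ n))
    (fun n ↦ by
      simpa only [← pow_succ', ← sub_eq_add_neg] using one_sub_pow_ne_zero hq n.succ_ne_zero)
    (by simpa only [norm_neg] using summable_norm_mul_pow q hq)
  simpa only [eulerFunction, qPochhammer, sub_eq_add_neg] using h

lemma qPochhammer_sq_mul_eulerFunction_sq {q : 𝕜} (hq : ‖q‖ < 1) :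
    qPochhammer q (q ^ 2) * eulerFunction (q ^ 2) = eulerFunction q := by
  simpa only [eulerFunction, sq q] using qPochhammer_even_mul_odd q hq

lemma eulerFunction_mul_eulerFunction_neg {q : 𝕜} (hq : ‖q‖ < 1) :
    eulerFunction q * eulerFunction (-q) * eulerFunction (q ^ 4) = eulerFunction (q ^ 2) ^ 3 := by
  have hq2 := norm_pow_lt_one hq two_ne_zero
  have h_pos := qPochhammer_sq_mul_eulerFunction_sq hq
  have h_neg := qPochhammer_sq_mul_eulerFunction_sq (q := -q) (by rwa [norm_neg])
  have h_sq := qPochhammer_sq_mul_eulerFunction_sq hq2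
  have h_mul := qPochhammer_mul_qPochhammer_neg q hq2
  rw [neg_sq] at h_neg
  rw [show (q ^ 2) ^ 2 = q ^ 4 by ring] at h_sq h_mul
  calc eulerFunction q * eulerFunction (-q) * eulerFunction (q ^ 4)
      = qPochhammer q (q ^ 2) * qPochhammer (-q) (q ^ 2) * eulerFunction (q ^ 4) *
          eulerFunction (q ^ 2) ^ 2 := by rw [← h_pos, ← h_neg]; ring
    _ = eulerFunction (q ^ 2) ^ 3 := by rw [h_mul, h_sq]; ring

lemma eulerTail_sub_one {q : 𝕜} (hq0 : q ≠ 0) (hq : ‖q‖ < 1) (m : ℤ) :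
    eulerTail q (m - 1) = (1 - q ^ m) * eulerTail q m := by
  rw [eulerTail, eulerTail, sub_add_cancel, qPochhammer_eq_one_sub_mul _ hq, zpow_add_one₀ hq0]

lemma tendsto_eulerTail {q : 𝕜} (hq : ‖q‖ < 1) : Tendsto (eulerTail q) atTop (𝓝 1) := by
  refine tendsto_qPochhammer_one ?_ hq
  rw [← Nat.map_cast_int_atTop, tendsto_map'_iff]
  refine ((tendsto_pow_atTop_nhds_zero_of_norm_lt_one hq).comp (tendsto_add_atTop_nat 1)).congr
    fun n ↦ ?_
  simp only [Function.comp_apply]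
  exact_mod_cast (zpow_natCast q (n + 1)).symm

lemma exists_norm_eulerTail_le {q : 𝕜} (hq0 : q ≠ 0) (hq : ‖q‖ < 1) :
    ∃ C : ℝ, ∀ m : ℤ, ‖eulerTail q m‖ ≤ C := by
  obtain ⟨C, hC⟩ :=
    ((tendsto_eulerTail hq).comp tendsto_natCast_atTop_atTop).norm.bddAbove_range
  have hC_nat (n : ℕ) : ‖eulerTail q n‖ ≤ C := hC ⟨n, rfl⟩
  refine ⟨C, fun m ↦ ?_⟩
  rcases lt_or_ge m 0 with hm | hm
  · rw [eulerTail_of_neg hq0 hm, norm_zero]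
    exact (norm_nonneg _).trans (hC_nat 0)
  · lift m to ℕ using hm
    exact hC_nat m

/-- The three-term recurrence of the central Gaussian binomial coefficients, cleared of
denominators. -/
lemma eulerTail_mul_eulerTail_recurrence {q : 𝕜} (hq0 : q ≠ 0) (hq : ‖q‖ < 1) (k l : ℤ) :
    (1 - q ^ (k + l - 1)) * (1 - q ^ (k + l)) * (eulerTail q k * eulerTail q l) =
      (1 + q ^ (k + l - 1)) * (eulerTail q (k - 1) * eulerTail q (l - 1)) +
        q ^ l * (eulerTail q (k - 1 - 1) * eulerTail q l) +
        q ^ k * (eulerTail q k * eulerTail q (l - 1 - 1)) := by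
  simp only [eulerTail_sub_one hq0 hq, zpow_sub_one₀ hq0, zpow_add₀ hq0]
  ring

lemma truncatedJacobiTerm_succ {q z : 𝕜} (hq0 : q ≠ 0) (hq : ‖q‖ < 1) (hz : z ≠ 0) (n : ℕ)
    (j : ℤ) :
    (1 - (q ^ 2) ^ (2 * n + 1)) * (1 - (q ^ 2) ^ (2 * n + 2)) * truncatedJacobiTerm q z (n + 1) j =
      (1 + (q ^ 2) ^ (2 * n + 1)) * truncatedJacobiTerm q z n j +
        q ^ (2 * n + 1) * z * truncatedJacobiTerm q z n (j - 1) +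
        q ^ (2 * n + 1) * z⁻¹ * truncatedJacobiTerm q z n (j + 1) := by
  have hsq (m : ℤ) : (q ^ 2) ^ m = q ^ (2 * m) := by rw [zpow_mul]; norm_cast
  have h_down : (q ^ 2) ^ (n + 1 - j) * jacobiTerm q z j =
      q ^ (2 * n + 1) * z * jacobiTerm q z (j - 1) := by
    have h := jacobiTerm_add_one hq0 hz (j - 1)
    rw [sub_add_cancel] at h
    rw [h, hsq, ← mul_assoc, ← mul_assoc, ← zpow_add₀ hq0, ← zpow_natCast]
    congr 3
    push_cast
    ring
  have h_up : (q ^ 2) ^ (n + 1 + j) * jacobiTerm q z j =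
      q ^ (2 * n + 1) * z⁻¹ * jacobiTerm q z (j + 1) := by
    have h_exp : (2 : ℤ) * (n + 1 + j) = (2 * n + 1 : ℕ) + (2 * j + 1) := by push_cast; ring
    rw [jacobiTerm_add_one hq0 hz, hsq, h_exp, zpow_add₀ hq0, zpow_natCast]
    field_simp
  have h_rec := eulerTail_mul_eulerTail_recurrence (pow_ne_zero 2 hq0)
    (norm_pow_lt_one hq two_ne_zero) (n + 1 + j) (n + 1 - j)
  rw [show (n : ℤ) + 1 + j + (n + 1 - j) - 1 = (2 * n + 1 : ℕ) by push_cast; ring,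
    show (n : ℤ) + 1 + j + (n + 1 - j) = (2 * n + 2 : ℕ) by push_cast; ring,
    zpow_natCast, zpow_natCast, show (n : ℤ) + 1 + j - 1 = n + j by ring,
    show (n : ℤ) + 1 - j - 1 = n - j by ring] at h_rec
  simp only [truncatedJacobiTerm, Nat.cast_add_one]
  rw [show (n : ℤ) + (j - 1) = n + j - 1 by ring, show (n : ℤ) - (j - 1) = n + 1 - j by ring,
    show (n : ℤ) + (j + 1) = n + 1 + j by ring, show (n : ℤ) - (j + 1) = n - j - 1 by ring]
  linear_combination jacobiTerm q z j * h_rec +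
    eulerTail (q ^ 2) (n + j - 1) * eulerTail (q ^ 2) (n + 1 - j) * h_down +
    eulerTail (q ^ 2) (n + 1 + j) * eulerTail (q ^ 2) (n - j - 1) * h_up

lemma hasSum_truncatedJacobiTerm {q z : 𝕜} (hq0 : q ≠ 0) (hq : ‖q‖ < 1) (hz : z ≠ 0) (n : ℕ) :
    HasSum (truncatedJacobiTerm q z n) (eulerTail (q ^ 2) (2 * n) * eulerFunction (q ^ 2) *
      ∏ k ∈ range n, ((1 + z * q ^ (2 * k + 1)) * (1 + z⁻¹ * q ^ (2 * k + 1)))) := by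
  have hq2 := norm_pow_lt_one hq two_ne_zero
  have hq20 : q ^ 2 ≠ 0 := pow_ne_zero 2 hq0
  induction n with
  | zero =>
    have h_off (j : ℤ) (hj : j ≠ 0) : truncatedJacobiTerm q z 0 j = 0 := by
      rcases lt_or_gt_of_ne hj with hj | hj <;>
        simp [truncatedJacobiTerm, eulerTail_of_neg hq20, hj]
    convert hasSum_single 0 h_off using 1
    simp [truncatedJacobiTerm, jacobiTerm, eulerTail_zero]
  | succ n ih =>
    set D : 𝕜 := (1 - (q ^ 2) ^ (2 * n + 1)) * (1 - (q ^ 2) ^ (2 * n + 2)) with hD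
    have hD0 : D ≠ 0 := mul_ne_zero (one_sub_pow_ne_zero hq2 (by lia))
      (one_sub_pow_ne_zero hq2 (by lia))
    have h_tail : eulerTail (q ^ 2) (2 * n) = D * eulerTail (q ^ 2) (2 * (n + 1 : ℕ)) := by
      rw [show (2 : ℤ) * n = 2 * (n + 1 : ℕ) - 1 - 1 by push_cast; ring,
        eulerTail_sub_one hq20 hq2, eulerTail_sub_one hq20 hq2, ← mul_assoc, hD,
        ← zpow_natCast _ (2 * n + 1), ← zpow_natCast _ (2 * n + 2)]
      congr 4
      push_cast
      ring
    have h_shift_down :=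
      ((Equiv.subRight (1 : ℤ)).hasSum_iff.mpr ih).mul_left (q ^ (2 * n + 1) * z)
    have h_shift_up :=
      ((Equiv.addRight (1 : ℤ)).hasSum_iff.mpr ih).mul_left (q ^ (2 * n + 1) * z⁻¹)
    have h_sum := ((ih.mul_left (1 + (q ^ 2) ^ (2 * n + 1))).add h_shift_down).add h_shift_up
    simp only [Function.comp_apply, Equiv.subRight_apply, Equiv.coe_addRight,
      ← truncatedJacobiTerm_succ hq0 hq hz n] at h_sum
    rw [← hasSum_mul_left_iff hD0]
    refine (congrArg (HasSum _) ?_).mpr h_sum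
    rw [prod_range_succ, h_tail]
    field_simp
    ring

lemma tendsto_tsum_truncatedJacobiTerm {q z : 𝕜} (hq0 : q ≠ 0) (hq : ‖q‖ < 1) (hz : z ≠ 0) :
    Tendsto (fun n ↦ ∑' j, truncatedJacobiTerm q z n j) atTop (𝓝 (∑' j, jacobiTerm q z j)) := by
  have h_tail := tendsto_eulerTail (norm_pow_lt_one hq two_ne_zero)
  obtain ⟨C, hC⟩ := exists_norm_eulerTail_le (pow_ne_zero 2 hq0) (norm_pow_lt_one hq two_ne_zero)
  have h_add (j : ℤ) : Tendsto (fun n : ℕ ↦ (n : ℤ) + j) atTop atTop :=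
    tendsto_atTop_add_const_right _ j tendsto_natCast_atTop_atTop
  refine tendsto_tsum_of_dominated_convergence (bound := fun j ↦ C * C * ‖jacobiTerm q z j‖)
    ((summable_norm_jacobiTerm hq0 hq hz).mul_left _) (fun j ↦ ?_) (.of_forall fun n j ↦ ?_)
  · simpa only [truncatedJacobiTerm, Function.comp_def, ← sub_eq_add_neg, one_mul] using
      ((h_tail.comp (h_add j)).mul (h_tail.comp (h_add (-j)))).mul_const (jacobiTerm q z j)
  · rw [truncatedJacobiTerm, norm_mul, norm_mul]
    have hC0 : 0 ≤ C := (norm_nonneg _).trans (hC 0)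
    gcongr <;> apply hC

theorem jacobi_triple_product {q z : 𝕜} (hq0 : q ≠ 0) (hq : ‖q‖ < 1) (hz : z ≠ 0) :
    HasSum (jacobiTerm q z)
      (eulerFunction (q ^ 2) *
        (qPochhammer (-(z * q)) (q ^ 2) * qPochhammer (-(z⁻¹ * q)) (q ^ 2))) := by
  have hq2 := norm_pow_lt_one hq two_ne_zero
  have h_factor (x : 𝕜) :
      HasProd (fun k : ℕ ↦ 1 + x * q ^ (2 * k + 1)) (qPochhammer (-(x * q)) (q ^ 2)) := by
    convert hasProd_qPochhammer (-(x * q)) hq2 using 2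
    ring
  have h_two_mul : Tendsto (fun n : ℕ ↦ (2 * n : ℤ)) atTop atTop :=
    tendsto_natCast_atTop_atTop.const_mul_atTop' two_pos
  have h_summable : Summable (jacobiTerm q z) := .of_norm (summable_norm_jacobiTerm hq0 hq hz)
  convert h_summable.hasSum
  refine tendsto_nhds_unique ?_ (tendsto_tsum_truncatedJacobiTerm hq0 hq hz)
  simp only [(hasSum_truncatedJacobiTerm hq0 hq hz _).tsum_eq]
  simpa only [Function.comp_def, one_mul] using
    (((tendsto_eulerTail hq2).comp h_two_mul).mul_const (eulerFunction (q ^ 2))).mul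
      ((h_factor z).mul (h_factor z⁻¹)).tendsto_prod_nat

/-! ### Theta constants -/

lemma hasSum_thetaThree {q : 𝕜} (hq0 : q ≠ 0) (hq : ‖q‖ < 1) :
    HasSum (fun j : ℤ ↦ q ^ (j ^ 2)) (thetaThree q) := by
  refine Summable.hasSum (.of_norm ?_)
  simpa only [jacobiTerm, one_zpow, mul_one] using summable_norm_jacobiTerm hq0 hq one_ne_zero

lemma hasSum_reducedThetaTwo {q : 𝕜} (hq0 : q ≠ 0) (hq : ‖q‖ < 1) :
    HasSum (fun j : ℤ ↦ q ^ (j ^ 2 + j)) (reducedThetaTwo q) := by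
  refine Summable.hasSum (.of_norm ?_)
  simpa only [jacobiTerm, zpow_add₀ hq0] using summable_norm_jacobiTerm hq0 hq hq0

lemma thetaThree_eq_add {q : 𝕜} (hq0 : q ≠ 0) (hq : ‖q‖ < 1) :
    thetaThree q = thetaThree (q ^ 4) + q * reducedThetaTwo (q ^ 4) := by
  have hq40 : q ^ 4 ≠ 0 := pow_ne_zero 4 hq0
  have hq4 := norm_pow_lt_one hq four_ne_zero
  have h_even : HasSum (fun j : ℤ ↦ q ^ ((2 * j) ^ 2)) (thetaThree (q ^ 4)) := by
    refine (hasSum_thetaThree hq40 hq4).congr_fun fun j ↦ ?_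
    rw [← zpow_natCast q 4, ← zpow_mul]
    congr 1
    push_cast
    ring
  have h_odd : HasSum (fun j : ℤ ↦ q ^ ((2 * j + 1) ^ 2)) (q * reducedThetaTwo (q ^ 4)) := by
    refine ((hasSum_reducedThetaTwo hq40 hq4).mul_left q).congr_fun fun j ↦ ?_
    rw [← zpow_natCast q 4, ← zpow_mul, ← zpow_one_add₀ hq0]
    congr 1
    push_cast
    ring
  exact (hasSum_thetaThree hq0 hq).unique (hasSum_int_of_even_of_odd h_even h_odd)

lemma thetaThree_neg_mul_eulerFunction {q : 𝕜} (hq0 : q ≠ 0) (hq : ‖q‖ < 1) :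
    thetaThree (-q) * eulerFunction (q ^ 2) = eulerFunction q ^ 2 := by
  have h_triple :=
    (jacobi_triple_product (neg_ne_zero.mpr hq0) (by rwa [norm_neg]) one_ne_zero).tsum_eq
  simp only [jacobiTerm, one_zpow, mul_one, inv_one, one_mul, neg_neg, neg_sq] at h_triple
  rw [thetaThree, h_triple, ← qPochhammer_sq_mul_eulerFunction_sq hq]
  ring

lemma thetaThree_mul_eulerFunction {q : 𝕜} (hq0 : q ≠ 0) (hq : ‖q‖ < 1) :
    thetaThree q * eulerFunction (q ^ 2) = eulerFunction (-q) ^ 2 := by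
  simpa only [neg_neg, neg_sq] using
    thetaThree_neg_mul_eulerFunction (neg_ne_zero.mpr hq0) (by rwa [norm_neg])

lemma reducedThetaTwo_mul_eulerFunction {q : 𝕜} (hq0 : q ≠ 0) (hq : ‖q‖ < 1) :
    reducedThetaTwo q * eulerFunction (q ^ 2) = 2 * eulerFunction (q ^ 4) ^ 2 := by
  have hq2 := norm_pow_lt_one hq two_ne_zero
  have h_triple := (jacobi_triple_product hq0 hq hq0).tsum_eq
  simp only [jacobiTerm, ← zpow_add₀ hq0, inv_mul_cancel₀ hq0, ← sq] at h_triple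
  have h_neg_one : qPochhammer (-1) (q ^ 2) = 2 * qPochhammer (-q ^ 2) (q ^ 2) := by
    rw [qPochhammer_eq_one_sub_mul _ hq2, neg_one_mul]
    ring
  have h_mul := qPochhammer_mul_qPochhammer_neg (q ^ 2) hq2
  rw [← pow_mul] at h_mul
  rw [reducedThetaTwo, h_triple, h_neg_one, eulerFunction, eulerFunction, ← h_mul]
  ring

lemma thetaThree_mul_thetaThree_neg {q : 𝕜} (hq0 : q ≠ 0) (hq : ‖q‖ < 1) :
    thetaThree q * thetaThree (-q) = thetaThree (-q ^ 2) ^ 2 := by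
  have hE2 := eulerFunction_ne_zero (norm_pow_lt_one hq two_ne_zero)
  have hE4 := eulerFunction_ne_zero (norm_pow_lt_one hq four_ne_zero)
  have h_pos := thetaThree_mul_eulerFunction hq0 hq
  have h_neg := thetaThree_neg_mul_eulerFunction hq0 hq
  have h_sq := thetaThree_neg_mul_eulerFunction (pow_ne_zero 2 hq0) (norm_pow_lt_one hq two_ne_zero)
  rw [← pow_mul] at h_sq
  refine mul_right_cancel₀ (pow_ne_zero 2 (mul_ne_zero hE2 hE4)) ?_
  calc thetaThree q * thetaThree (-q) * (eulerFunction (q ^ 2) * eulerFunction (q ^ 4)) ^ 2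
      = (thetaThree q * eulerFunction (q ^ 2)) * (thetaThree (-q) * eulerFunction (q ^ 2)) *
          eulerFunction (q ^ 4) ^ 2 := by ring
    _ = (eulerFunction q * eulerFunction (-q) * eulerFunction (q ^ 4)) ^ 2 := by
      rw [h_pos, h_neg]; ring
    _ = (eulerFunction (q ^ 2) ^ 2) ^ 2 * eulerFunction (q ^ 2) ^ 2 := by
      rw [eulerFunction_mul_eulerFunction_neg hq]; ring
    _ = thetaThree (-q ^ 2) ^ 2 * (eulerFunction (q ^ 2) * eulerFunction (q ^ 4)) ^ 2 := by
      nth_rw 1 [← h_sq]; ring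

lemma two_mul_thetaThree_sq_mul_reducedThetaTwo_sq {q : 𝕜} (hq0 : q ≠ 0) (hq : ‖q‖ < 1) :
    2 * thetaThree (q ^ 2) * reducedThetaTwo (q ^ 2) = reducedThetaTwo q ^ 2 := by
  have hq20 : q ^ 2 ≠ 0 := pow_ne_zero 2 hq0
  have hq2 := norm_pow_lt_one hq two_ne_zero
  have hE2 := eulerFunction_ne_zero hq2
  have hE4 := eulerFunction_ne_zero (norm_pow_lt_one hq four_ne_zero)
  have h_psi := reducedThetaTwo_mul_eulerFunction hq0 hq
  have h_theta_sq := thetaThree_mul_eulerFunction hq20 hq2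
  have h_psi_sq := reducedThetaTwo_mul_eulerFunction hq20 hq2
  have h_euler := eulerFunction_mul_eulerFunction_neg hq2
  rw [← pow_mul] at h_theta_sq
  rw [← pow_mul, ← pow_mul] at h_psi_sq h_euler
  refine mul_right_cancel₀ (pow_ne_zero 2 (mul_ne_zero hE2 hE4)) ?_
  calc 2 * thetaThree (q ^ 2) * reducedThetaTwo (q ^ 2) *
        (eulerFunction (q ^ 2) * eulerFunction (q ^ 4)) ^ 2
      = 2 * (thetaThree (q ^ 2) * eulerFunction (q ^ 4)) *
          (reducedThetaTwo (q ^ 2) * eulerFunction (q ^ 4)) * eulerFunction (q ^ 2) ^ 2 := by ring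
    _ = 4 * (eulerFunction (q ^ 2) * eulerFunction (-q ^ 2) * eulerFunction (q ^ 8)) ^ 2 := by
      rw [h_theta_sq, h_psi_sq]; ring
    _ = (2 * eulerFunction (q ^ 4) ^ 2) ^ 2 * eulerFunction (q ^ 4) ^ 2 := by rw [h_euler]; ring
    _ = reducedThetaTwo q ^ 2 * (eulerFunction (q ^ 2) * eulerFunction (q ^ 4)) ^ 2 := by
      rw [← h_psi]; ring

lemma thetaThree_sq_sub_thetaThree_neg_sq {q : 𝕜} (hq0 : q ≠ 0) (hq : ‖q‖ < 1) :
    thetaThree q ^ 2 - thetaThree (-q) ^ 2 = 2 * q * reducedThetaTwo (q ^ 2) ^ 2 := by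
  have h_neg := thetaThree_eq_add (neg_ne_zero.mpr hq0) (by rwa [norm_neg])
  have h_double := two_mul_thetaThree_sq_mul_reducedThetaTwo_sq (pow_ne_zero 2 hq0)
    (norm_pow_lt_one hq two_ne_zero)
  rw [Even.neg_pow (by decide)] at h_neg
  rw [← pow_mul] at h_double
  rw [thetaThree_eq_add hq0 hq, h_neg, ← h_double]
  ring

lemma thetaThree_pow_four_add_thetaThree_neg_pow_four {q : 𝕜} (hq0 : q ≠ 0) (hq : ‖q‖ < 1) :
    thetaThree q ^ 4 + thetaThree (-q) ^ 4 =
      2 * thetaThree (-q ^ 2) ^ 4 + 4 * q ^ 2 * reducedThetaTwo (q ^ 2) ^ 4 := by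
  calc thetaThree q ^ 4 + thetaThree (-q) ^ 4
      = 2 * (thetaThree q * thetaThree (-q)) ^ 2 +
          (thetaThree q ^ 2 - thetaThree (-q) ^ 2) ^ 2 := by ring
    _ = 2 * thetaThree (-q ^ 2) ^ 4 + 4 * q ^ 2 * reducedThetaTwo (q ^ 2) ^ 4 := by
      rw [thetaThree_mul_thetaThree_neg hq0 hq, thetaThree_sq_sub_thetaThree_neg_sq hq0 hq]
      ring

lemma eulerFunction_pow_eight_add_eulerFunction_neg_pow_eight {q : 𝕜} (hq0 : q ≠ 0)
    (hq : ‖q‖ < 1) :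
    eulerFunction q ^ 8 + eulerFunction (-q) ^ 8 =
      2 * (eulerFunction (q ^ 2) ^ 12 / eulerFunction (q ^ 4) ^ 4 +
        32 * q ^ 2 * eulerFunction (q ^ 2) ^ 4 * eulerFunction (q ^ 8) ^ 8 /
          eulerFunction (q ^ 4) ^ 4) := by
  have hq20 : q ^ 2 ≠ 0 := pow_ne_zero 2 hq0
  have hq2 := norm_pow_lt_one hq two_ne_zero
  have hE4 := eulerFunction_ne_zero (norm_pow_lt_one hq four_ne_zero)
  have h_theta_sq := thetaThree_neg_mul_eulerFunction hq20 hq2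
  have h_psi_sq := reducedThetaTwo_mul_eulerFunction hq20 hq2
  rw [← pow_mul] at h_theta_sq
  rw [← pow_mul, ← pow_mul] at h_psi_sq
  calc eulerFunction q ^ 8 + eulerFunction (-q) ^ 8
      = (eulerFunction (-q) ^ 2) ^ 4 + (eulerFunction q ^ 2) ^ 4 := by ring
    _ = (thetaThree q ^ 4 + thetaThree (-q) ^ 4) * eulerFunction (q ^ 2) ^ 4 := by
      rw [← thetaThree_mul_eulerFunction hq0 hq, ← thetaThree_neg_mul_eulerFunction hq0 hq]; ring
    _ = (2 * thetaThree (-q ^ 2) ^ 4 + 4 * q ^ 2 * reducedThetaTwo (q ^ 2) ^ 4) *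
          eulerFunction (q ^ 2) ^ 4 := by
      rw [thetaThree_pow_four_add_thetaThree_neg_pow_four hq0 hq]
    _ = 2 * (eulerFunction (q ^ 2) ^ 12 / eulerFunction (q ^ 4) ^ 4 +
        32 * q ^ 2 * eulerFunction (q ^ 2) ^ 4 * eulerFunction (q ^ 8) ^ 8 /
          eulerFunction (q ^ 4) ^ 4) := by
      rw [eq_div_of_mul_eq hE4 h_theta_sq, eq_div_of_mul_eq hE4 h_psi_sq]
      field_simp
      ring

lemma hasSum_mod_eight_of_eulerFunction_quotient {ζ : 𝕜} (hζ : IsPrimitiveRoot ζ 8)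
    {a : ℕ → 𝕜} {q : 𝕜} (hq0 : q ≠ 0) (hq : ‖q‖ < 1)
    (h : ∀ j : ℕ, HasSum (fun k ↦ a k * (ζ ^ j * q) ^ k)
      (eulerFunction ((ζ ^ j * q) ^ 4) ^ 8 / eulerFunction ((ζ ^ j * q) ^ 8) ^ 7)) :
    HasSum (fun k ↦ (if k % 8 = 0 then a k else 0) * q ^ k)
      (eulerFunction (q ^ 8) ^ 5 / eulerFunction (q ^ 16) ^ 4 +
        32 * q ^ 8 * eulerFunction (q ^ 32) ^ 8 /
          (eulerFunction (q ^ 8) ^ 3 * eulerFunction (q ^ 16) ^ 4)) := by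
  have hζ4 : ζ ^ 4 = -1 := (hζ.pow (by decide) (by decide : 8 = 4 * 2)).eq_neg_one_of_two_right
  have h_eight : ((8 : ℕ) : 𝕜) ≠ 0 := hζ.neZero'.out
  have h_pow_four (j : ℕ) : (ζ ^ j * q) ^ 4 = (-1) ^ j * q ^ 4 := by
    rw [mul_pow, pow_right_comm, hζ4]
  have h_pow_eight (j : ℕ) : (ζ ^ j * q) ^ 8 = q ^ 8 := by
    rw [mul_pow, pow_right_comm, hζ.pow_eq_one, one_pow, one_mul]
  have h_core := eulerFunction_pow_eight_add_eulerFunction_neg_pow_eight (pow_ne_zero 4 hq0)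
    (norm_pow_lt_one hq four_ne_zero)
  simp only [← pow_mul, Nat.reduceMul] at h_core
  rw [← hasSum_mul_left_iff h_eight]
  refine (congrArg (HasSum _) ?_).mpr (hasSum_multisection hζ fun j _ ↦ h j)
  calc _ = 4 * ((eulerFunction (q ^ 4) ^ 8 + eulerFunction (-q ^ 4) ^ 8) /
        eulerFunction (q ^ 8) ^ 7) := by
        rw [h_core]
        field_simp
        norm_num
        ring
    _ = _ := by
      simp only [h_pow_four, h_pow_eight, sum_range_succ, sum_range_zero]
      norm_num
      ring

end Complete

end QSeries

/-! ### Eta quotients -/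

lemma norm_nome_lt_one {τ : ℂ} (hτ : 0 < τ.im) : ‖nome τ‖ < 1 :=
  UpperHalfPlane.norm_exp_two_pi_I_lt_one ⟨τ, hτ⟩

lemma nome_ne_zero (τ : ℂ) : nome τ ≠ 0 := Complex.exp_ne_zero _

lemma nome_natCast_mul (n : ℕ) (τ : ℂ) : nome (n * τ) = nome τ ^ n := by
  rw [nome, nome, ← Complex.exp_nat_mul]
  ring_nf

lemma nome_add_natCast_div (τ : ℂ) (j n : ℕ) :
    nome (τ + j / n) = Complex.exp (2 * π * I / n) ^ j * nome τ := by
  rw [nome, nome, ← Complex.exp_nat_mul, ← Complex.exp_add]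
  ring_nf

/-- The fractional power `q^{1/24} = e^{πiτ/12}` in the definition of the eta function, on the
branch single-valued in `τ`. -/
def etaPrefactor (τ : ℂ) : ℂ := Complex.exp ((π : ℂ) * I * τ / 12)

lemma etaPrefactor_ne_zero (τ : ℂ) : etaPrefactor τ ≠ 0 := Complex.exp_ne_zero _

lemma etaPrefactor_pow (τ : ℂ) : etaPrefactor τ ^ 24 = nome τ := by
  rw [etaPrefactor, nome, ← Complex.exp_nat_mul]
  push_cast
  ring_nf

lemma dedekindEta_natCast_mul (n : ℕ) (τ : ℂ) :
    dedekindEta (n * τ) = etaPrefactor τ ^ n * eulerFunction (nome τ ^ n) := by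
  simp only [dedekindEta, eulerFunction, qPochhammer, etaPrefactor, nome_natCast_mul, pow_succ',
    ← Complex.exp_nat_mul]
  ring_nf

lemma nome_mul_dedekindEta_quotient (τ : ℂ) :
    nome τ * (dedekindEta (4 * τ) ^ 8 / dedekindEta (8 * τ) ^ 7) =
      eulerFunction (nome τ ^ 4) ^ 8 / eulerFunction (nome τ ^ 8) ^ 7 := by
  have h4 := dedekindEta_natCast_mul 4 τ
  have h8 := dedekindEta_natCast_mul 8 τ
  have h_ne := etaPrefactor_ne_zero τ
  push_cast at h4 h8
  rw [h4, h8]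
  nth_rw 1 [← etaPrefactor_pow]
  field_simp

lemma nome_mul_dedekindEta_quotient_add (τ : ℂ) :
    nome τ * (dedekindEta (8 * τ) ^ 5 / dedekindEta (16 * τ) ^ 4 +
        32 * dedekindEta (32 * τ) ^ 8 / (dedekindEta (8 * τ) ^ 3 * dedekindEta (16 * τ) ^ 4)) =
      eulerFunction (nome τ ^ 8) ^ 5 / eulerFunction (nome τ ^ 16) ^ 4 +
        32 * nome τ ^ 8 * eulerFunction (nome τ ^ 32) ^ 8 /
          (eulerFunction (nome τ ^ 8) ^ 3 * eulerFunction (nome τ ^ 16) ^ 4) := by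
  have h8 := dedekindEta_natCast_mul 8 τ
  have h16 := dedekindEta_natCast_mul 16 τ
  have h32 := dedekindEta_natCast_mul 32 τ
  have h_ne := etaPrefactor_ne_zero τ
  push_cast at h8 h16 h32
  rw [h8, h16, h32]
  generalize eulerFunction (nome τ ^ 8) = a
  generalize eulerFunction (nome τ ^ 16) = b
  generalize eulerFunction (nome τ ^ 32) = d
  rw [← etaPrefactor_pow, mul_add]
  congr 1 <;> field_simp

lemma hasSum_eulerFunction_quotient {a : ℕ → ℂ}
    (h : ∀ τ : ℂ, 0 < τ.im → HasSum (fun k ↦ a k * nome τ ^ k)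
      (nome τ * (dedekindEta (4 * τ) ^ 8 / dedekindEta (8 * τ) ^ 7)))
    {τ : ℂ} (hτ : 0 < τ.im) (j n : ℕ) :
    HasSum (fun k ↦ a k * (Complex.exp (2 * π * I / n) ^ j * nome τ) ^ k)
      (eulerFunction ((Complex.exp (2 * π * I / n) ^ j * nome τ) ^ 4) ^ 8 /
        eulerFunction ((Complex.exp (2 * π * I / n) ^ j * nome τ) ^ 8) ^ 7) := by
  have h_im : 0 < (τ + j / n).im := by
    rw [add_im, ← ofReal_natCast, ← ofReal_natCast, ← ofReal_div, ofReal_im, add_zero]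
    exact hτ
  rw [← nome_add_natCast_div, ← nome_mul_dedekindEta_quotient]
  exact h _ h_im

/-- let `c : ℕ → ℤ` be the coefficient sequence of the formal power series
`∏(1−X^{4n})⁸/∏(1−X^{8n})⁷`, characterized by `η(4τ)⁸/η(8τ)⁷ = Σ_{k≥0} c(k) q^{k−1}` on ℍ.
Then `Σ_{k≥0, k≡0 (8)} c(k) q^{k−1} = η(8τ)⁵/η(16τ)⁴ + 32 η(32τ)⁸/(η(8τ)³η(16τ)⁴)`. -/
theorem stmt7 (c : ℕ → ℤ)
    (hc : ∀ τ : ℂ, 0 < τ.im →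
      HasSum (fun k : ℕ => (c k : ℂ) * nome τ ^ k)
        (nome τ * (dedekindEta (4 * τ) ^ 8 / dedekindEta (8 * τ) ^ 7)))
    (τ : ℂ) (hτ : 0 < τ.im) :
    (nome τ)⁻¹ * ∑' k : ℕ, (if k % 8 = 0 then (c k : ℂ) else 0) * nome τ ^ k =
      dedekindEta (8 * τ) ^ 5 / dedekindEta (16 * τ) ^ 4 +
        32 * dedekindEta (32 * τ) ^ 8 /
          (dedekindEta (8 * τ) ^ 3 * dedekindEta (16 * τ) ^ 4) := by
  rw [inv_mul_eq_iff_eq_mul₀ (nome_ne_zero τ), nome_mul_dedekindEta_quotient_add]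
  have h_root : IsPrimitiveRoot (Complex.exp (2 * π * I / (8 : ℕ))) 8 :=
    Complex.isPrimitiveRoot_exp 8 (by decide)
  exact (hasSum_mod_eight_of_eulerFunction_quotient h_root (nome_ne_zero τ) (norm_nome_lt_one hτ)
    fun j ↦ hasSum_eulerFunction_quotient hc hτ j 8).tsum_eq
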